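/- Let C ⊆ F_{q^m}^n be an arbitrary (not necessarily linear) code with at least two elements and let ρ be a nonnegative integer. (i) If ρ < d_R(C), then for every F_q-subspace L ⊆ F_q^n with dim_{F_q} L ≥ n − ρ and all c_1, c_2 ∈ C: c_1 − c_2 ∈ V_{L^⊥} implies c_1 = c_2 (that is, L is an information space for C). (ii) If d_R(C) ≤ ρ ≤ n, then there exist an F_q-subspace L ⊆ F_q^n with dim_{F_q} L = n − ρ and distinct c_1, c_2 ∈ C with c_1 − c_2 ∈ V_{L^⊥}. -/

import Mathlib

open Submodule Module

namespace RankPaper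

variable {n : ℕ}

/-- The coordinatewise `q^i`-th power map on `Fqm^n`. -/
def qpowMap (q i : ℕ) {Fqm : Type} [Field Fqm] (v : Fin n → Fqm) : Fin n → Fqm :=
  fun j => v j ^ q ^ i

/-- The Galois closure `D* = Σ_{i=0}^{m-1} D^{q^i}` of a subspace (as the span of the
union of the images of `D` under the coordinatewise `q^i`-power maps, `0 ≤ i < m`). -/
def galClosure (q m : ℕ) {Fqm : Type} [Field Fqm] (D : Submodule Fqm (Fin n → Fqm)) :
    Submodule Fqm (Fin n → Fqm) :=
  Submodule.span Fqm (⋃ i ∈ Finset.range m, qpowMap q i '' (D : Set (Fin n → Fqm)))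

/-- `D` is Galois closed if `D = D*`. -/
def GaloisClosed (q m : ℕ) {Fqm : Type} [Field Fqm] (D : Submodule Fqm (Fin n → Fqm)) : Prop :=
  galClosure q m D = D

/-- Rank weight of a subspace: `wt_R(D) = dim_{Fqm} D*`. -/
noncomputable def wtR (q m : ℕ) {Fqm : Type} [Field Fqm]
    (D : Submodule Fqm (Fin n → Fqm)) : ℕ :=
  finrank Fqm (galClosure q m D)

/-- Rank weight of a vector: `wt_R(c) = wt_R(span {c})`. -/
noncomputable def wtRv (q m : ℕ) {Fqm : Type} [Field Fqm] (c : Fin n → Fqm) : ℕ :=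
  wtR q m (Submodule.span Fqm ({c} : Set (Fin n → Fqm)))

/-- Hamming weight of a subspace: the number of coordinates where some element is nonzero. -/
noncomputable def wtH {Fqm : Type} [Field Fqm] (D : Submodule Fqm (Fin n → Fqm)) : ℕ :=
  {i : Fin n | ∃ d ∈ D, d i ≠ 0}.ncard

/-- `r`-th generalized rank weight of a linear code. -/
noncomputable def dR (q m : ℕ) {Fqm : Type} [Field Fqm]
    (C : Submodule Fqm (Fin n → Fqm)) (r : ℕ) : ℕ :=
  sInf { dv | ∃ V : Submodule Fqm (Fin n → Fqm),
    GaloisClosed q m V ∧ r ≤ finrank Fqm ↥(C ⊓ V) ∧ dv = finrank Fqm ↥V }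

/-- `r`-th generalized Hamming weight of a linear code. -/
noncomputable def dH {Fqm : Type} [Field Fqm]
    (C : Submodule Fqm (Fin n → Fqm)) (r : ℕ) : ℕ :=
  sInf { w | ∃ D : Submodule Fqm (Fin n → Fqm), D ≤ C ∧ finrank Fqm ↥D = r ∧ w = wtH D }

/-- `r`-th relative generalized rank weight of a nested code pair. -/
noncomputable def MR (q m : ℕ) {Fqm : Type} [Field Fqm]
    (C₁ C₂ : Submodule Fqm (Fin n → Fqm)) (r : ℕ) : ℕ :=
  sInf { dv | ∃ V : Submodule Fqm (Fin n → Fqm), GaloisClosed q m V ∧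
    r ≤ finrank Fqm ↥(C₁ ⊓ V) - finrank Fqm ↥(C₂ ⊓ V) ∧ dv = finrank Fqm ↥V }

/-- Minimum rank distance of an arbitrary (possibly nonlinear) code. -/
noncomputable def dRset (q m : ℕ) {Fqm : Type} [Field Fqm] (C : Set (Fin n → Fqm)) : ℕ :=
  sInf { w | ∃ c₁ ∈ C, ∃ c₂ ∈ C, c₁ ≠ c₂ ∧ w = wtRv q m (c₁ - c₂) }

/-- The linear functional `x ↦ Σ_j x_j y_j` (dot product with `y`). -/
def dotLin {K : Type} [Field K] (y : Fin n → K) : (Fin n → K) →ₗ[K] K :=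
  ∑ j, y j • LinearMap.proj j

/-- Orthogonal complement of a subspace with respect to the standard bilinear form. -/
def perp {K : Type} [Field K] (L : Submodule K (Fin n → K)) : Submodule K (Fin n → K) :=
  ⨅ y ∈ L, LinearMap.ker (dotLin y)

/-- The coordinatewise inclusion `Fq^n → Fqm^n`. -/
def embFq (Fq Fqm : Type) [Field Fq] [Field Fqm] [Algebra Fq Fqm] :
    (Fin n → Fq) →ₗ[Fq] (Fin n → Fqm) :=
  LinearMap.pi fun j => (Algebra.linearMap Fq Fqm).comp (LinearMap.proj j)

/-- `V_L = L ⊗ Fqm`, the `Fqm`-span of `L ⊆ Fq^n` inside `Fqm^n`. -/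
def VL {Fq : Type} (Fqm : Type) [Field Fq] [Field Fqm] [Algebra Fq Fqm]
    (L : Submodule Fq (Fin n → Fq)) : Submodule Fqm (Fin n → Fqm) :=
  Submodule.span Fqm (embFq Fq Fqm '' (L : Set (Fin n → Fq)))

/-- Rank-punctured code `C^L`: the image of `C` in `Fqm^n / V_{L^⊥}`. -/
noncomputable def punct {Fq Fqm : Type} [Field Fq] [Field Fqm] [Algebra Fq Fqm]
    (L : Submodule Fq (Fin n → Fq)) (C : Submodule Fqm (Fin n → Fqm)) :
    Submodule Fqm ((Fin n → Fqm) ⧸ VL Fqm (perp L)) :=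
  Submodule.map (VL Fqm (perp L)).mkQ C

/-!
The Galois closure of `D` is extended from `Fq`: it equals `V_M`, where `M` is the image of `D`
under the coordinatewise trace. Indeed the trace is the sum of the Frobenius powers, so `V_M` lies
in `D*`; conversely, expanding `c ∈ D` in a trace-dual basis writes `c` as a combination of the
traces of the vectors `b i • c ∈ D`, and `V_M` is Frobenius stable. Hence `wt_R(c)` is the least
dimension of a subspace `M ⊆ Fq^n` with `c ∈ V_M`, and duality `M = L^⊥` exchanges dimensions `k`
and `n - k`.
-/

theorem exists_le_finrank_eq {R E : Type*} [Ring R] [StrongRankCondition R] [AddCommGroup E]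
    [Module R E] (P : Submodule R E) {k : ℕ} (hk : k ≤ finrank R P) :
    ∃ L ≤ P, finrank R L = k := by
  have := nontrivial_of_invariantBasisNumber R
  obtain ⟨f, hf⟩ := exists_linearIndependent_of_le_finrank hk
  have hf_coe : LinearIndependent R fun i => (f i : E) := hf.map' P.subtype P.ker_subtype
  refine ⟨span R (Set.range fun i => (f i : E)), ?_, ?_⟩
  · rw [span_le]
    rintro _ ⟨i, rfl⟩
    exact (f i).2
  · rw [finrank_span_eq_card hf_coe, Fintype.card_fin]

theorem dotProductBilin_isSymm {R ι : Type*} [CommSemiring R] [Fintype ι] :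
    LinearMap.BilinForm.IsSymm (dotProductBilin R R : LinearMap.BilinForm R (ι → R)) :=
  ⟨fun x y => dotProduct_comm x y⟩

theorem dotProductBilin_nondegenerate {R ι : Type*} [CommSemiring R] [Fintype ι] :
    (dotProductBilin R R : LinearMap.BilinForm R (ι → R)).Nondegenerate :=
  ⟨dotProduct_eq_zero, fun y hy => dotProduct_eq_zero y fun x => (dotProduct_comm y x).trans (hy x)⟩

section Perp

variable {K : Type} [Field K]

theorem perp_eq_orthogonal (L : Submodule K (Fin n → K)) :
    perp L = LinearMap.BilinForm.orthogonal (dotProductBilin K K) L := by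
  ext x
  simp [perp, dotLin, LinearMap.BilinForm.mem_orthogonal_iff, dotProduct]

theorem finrank_perp (L : Submodule K (Fin n → K)) : finrank K (perp L) = n - finrank K L := by
  rw [perp_eq_orthogonal, LinearMap.BilinForm.finrank_orthogonal dotProductBilin_nondegenerate,
    finrank_fin_fun]

theorem perp_perp (L : Submodule K (Fin n → K)) : perp (perp L) = L := by
  rw [perp_eq_orthogonal, perp_eq_orthogonal, LinearMap.BilinForm.orthogonal_orthogonal
    dotProductBilin_nondegenerate dotProductBilin_isSymm.isRefl]

theorem perp_anti {L M : Submodule K (Fin n → K)} (h : L ≤ M) : perp M ≤ perp L :=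
  biInf_mono h

theorem exists_finrank_eq_le_perp {M : Submodule K (Fin n → K)} {k : ℕ} (hM : finrank K M ≤ k) :
    ∃ L : Submodule K (Fin n → K), finrank K L = n - k ∧ M ≤ perp L := by
  have hk : n - k ≤ finrank K (perp M) := by
    rw [finrank_perp]
    exact Nat.sub_le_sub_left hM n
  obtain ⟨L, hL, hL_rank⟩ := exists_le_finrank_eq (perp M) hk
  exact ⟨L, hL_rank, (perp_perp M).ge.trans (perp_anti hL)⟩

end Perp

section Extension

variable {Fq Fqm : Type} [Field Fq] [Field Fqm] [Algebra Fq Fqm]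

theorem VL_mono {L M : Submodule Fq (Fin n → Fq)} (h : L ≤ M) : VL Fqm L ≤ VL Fqm M :=
  span_mono (Set.image_mono h)

theorem embFq_mem_VL {L : Submodule Fq (Fin n → Fq)} {x : Fin n → Fq} (hx : x ∈ L) :
    embFq Fq Fqm x ∈ VL Fqm L :=
  subset_span (Set.mem_image_of_mem _ hx)

theorem VL_span (s : Set (Fin n → Fq)) : VL Fqm (span Fq s) = span Fqm (embFq Fq Fqm '' s) := by
  rw [VL, ← map_coe, map_span, span_span_of_tower]

theorem linearIndependent_embFq_comp {ι : Type*} {v : ι → Fin n → Fq}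
    (hv : LinearIndependent Fq v) : LinearIndependent Fqm (embFq Fq Fqm ∘ v) :=
  linearIndependent_algebraMap_comp_iff.mpr hv

theorem finrank_VL (L : Submodule Fq (Fin n → Fq)) : finrank Fqm (VL Fqm L) = finrank Fq L := by
  obtain ⟨v, hv_span, hv⟩ : ∃ v : Fin (finrank Fq L) → Fin n → Fq,
      span Fq (Set.range v) = L ∧ LinearIndependent Fq v := by
    let b := finBasis Fq L
    refine ⟨L.subtype ∘ b, ?_, b.linearIndependent.map' L.subtype L.ker_subtype⟩
    rw [Set.range_comp, span_image, b.span_eq, map_subtype_top]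
  have hVL : VL Fqm L = span Fqm (Set.range (embFq Fq Fqm ∘ v)) := by
    rw [Set.range_comp, ← VL_span, hv_span]
  rw [hVL, finrank_span_eq_card (linearIndependent_embFq_comp hv), Fintype.card_fin]

theorem algHom_comp_mem_VL {K : Type} [Field K] [Algebra Fq K] (φ : Fqm →ₐ[Fq] K)
    {L : Submodule Fq (Fin n → Fq)} {v : Fin n → Fqm} (hv : v ∈ VL Fqm L) : φ ∘ v ∈ VL K L := by
  induction hv using span_induction with
  | mem _ hx =>
    obtain ⟨x, hx, rfl⟩ := hx
    have hφ : φ ∘ embFq Fq Fqm x = embFq Fq K x := funext fun j => φ.commutes (x j)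
    rw [hφ]
    exact embFq_mem_VL hx
  | zero =>
    have hφ : φ ∘ (0 : Fin n → Fqm) = 0 := funext fun _ => map_zero φ
    rw [hφ]
    exact zero_mem _
  | add x y _ _ hx hy =>
    have hφ : φ ∘ (x + y) = φ ∘ x + φ ∘ y := funext fun _ => map_add φ _ _
    rw [hφ]
    exact add_mem hx hy
  | smul a x _ hx =>
    have hφ : φ ∘ (a • x) = φ a • (φ ∘ x) := funext fun _ => map_mul φ _ _
    rw [hφ]
    exact smul_mem _ _ hx

theorem qpowMap_mem_VL [Finite Fq] (i : ℕ) {L : Submodule Fq (Fin n → Fq)} {v : Fin n → Fqm}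
    (hv : v ∈ VL Fqm L) : qpowMap (Nat.card Fq) i v ∈ VL Fqm L := by
  have := Fintype.ofFinite Fq
  have hfrob : qpowMap (Nat.card Fq) i v = (FiniteField.frobeniusAlgHom Fq Fqm ^ i) ∘ v := by
    ext j
    rw [Function.comp_apply, AlgHom.coe_pow, FiniteField.coe_frobeniusAlgHom, pow_iterate,
      Fintype.card_eq_nat_card, qpowMap]
  rw [hfrob]
  exact algHom_comp_mem_VL _ hv

end Extension

section GalClosure

theorem galClosure_le_iff {F : Type} [Field F] {q m : ℕ} {D V : Submodule F (Fin n → F)} :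
    galClosure q m D ≤ V ↔ ∀ i < m, ∀ v ∈ D, qpowMap q i v ∈ V := by
  simp only [galClosure, span_le, Set.iUnion_subset_iff, Set.image_subset_iff, Finset.mem_range]
  rfl

variable {Fq Fqm : Type} [Field Fq] [Field Fqm] [Algebra Fq Fqm]

theorem galClosure_le_VL [Finite Fq] (m : ℕ) {D : Submodule Fqm (Fin n → Fqm)}
    {L : Submodule Fq (Fin n → Fq)} (h : D ≤ VL Fqm L) :
    galClosure (Nat.card Fq) m D ≤ VL Fqm L :=
  galClosure_le_iff.mpr fun i _ _ hv => qpowMap_mem_VL i (h hv)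

theorem wtRv_le_finrank_of_mem_VL [Finite Fq] (m : ℕ) {c : Fin n → Fqm}
    {L : Submodule Fq (Fin n → Fq)} (hc : c ∈ VL Fqm L) :
    wtRv (Nat.card Fq) m c ≤ finrank Fq L := by
  rw [← finrank_VL (Fqm := Fqm)]
  exact finrank_mono (galClosure_le_VL m ((span_singleton_le_iff_mem _ _).mpr hc))

variable (Fq) in
/-- The trace of a subspace `D ⊆ Fqm^n`: the `Fq`-subspace of `Fq^n` consisting of the
coordinatewise traces of the vectors of `D`. It is the subspace from which `D*` is extended. -/
noncomputable def traceSubspace (D : Submodule Fqm (Fin n → Fqm)) : Submodule Fq (Fin n → Fq) :=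
  (D.restrictScalars Fq).map ((Algebra.trace Fq Fqm).compLeft (Fin n))

theorem le_VL_traceSubspace [FiniteDimensional Fq Fqm] [Algebra.IsSeparable Fq Fqm]
    (D : Submodule Fqm (Fin n → Fqm)) : D ≤ VL Fqm (traceSubspace Fq D) := by
  intro c hc
  let b := finBasis Fq Fqm
  have hexpand : c = ∑ i, b.traceDual i •
      embFq Fq Fqm ((Algebra.trace Fq Fqm).compLeft (Fin n) (b i • c)) := by
    ext j
    conv_lhs => rw [← b.traceDual.sum_repr (c j)]
    simp [embFq, Algebra.smul_def, mul_comm]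
  rw [hexpand]
  exact sum_mem fun i _ => smul_mem _ _ (embFq_mem_VL (mem_map_of_mem (D.smul_mem (b i) hc)))

theorem embFq_trace_eq_sum_qpowMap [Finite Fqm] (v : Fin n → Fqm) :
    embFq Fq Fqm ((Algebra.trace Fq Fqm).compLeft (Fin n) v) =
      ∑ i ∈ Finset.range (finrank Fq Fqm), qpowMap (Nat.card Fq) i v := by
  ext j
  rw [Finset.sum_apply]
  exact FiniteField.algebraMap_trace_eq_sum_pow Fq Fqm (v j)

theorem VL_traceSubspace_le_galClosure [Finite Fqm] (D : Submodule Fqm (Fin n → Fqm)) :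
    VL Fqm (traceSubspace Fq D) ≤ galClosure (Nat.card Fq) (finrank Fq Fqm) D := by
  rw [VL, span_le]
  rintro _ ⟨_, ⟨v, hv, rfl⟩, rfl⟩
  rw [embFq_trace_eq_sum_qpowMap]
  exact sum_mem fun i hi => galClosure_le_iff.mp le_rfl i (Finset.mem_range.mp hi) v hv

theorem galClosure_eq_VL_traceSubspace [Finite Fqm] (D : Submodule Fqm (Fin n → Fqm)) :
    galClosure (Nat.card Fq) (finrank Fq Fqm) D = VL Fqm (traceSubspace Fq D) := by
  have : Finite Fq := .of_injective _ (FaithfulSMul.algebraMap_injective Fq Fqm)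
  exact (galClosure_le_VL _ (le_VL_traceSubspace D)).antisymm (VL_traceSubspace_le_galClosure D)

theorem wtR_eq_finrank_traceSubspace [Finite Fqm] (D : Submodule Fqm (Fin n → Fqm)) :
    wtR (Nat.card Fq) (finrank Fq Fqm) D = finrank Fq (traceSubspace Fq D) := by
  rw [wtR, galClosure_eq_VL_traceSubspace, finrank_VL]

variable (Fq) in
theorem exists_mem_VL_finrank_eq_wtRv [Finite Fqm] (c : Fin n → Fqm) :
    ∃ M : Submodule Fq (Fin n → Fq), c ∈ VL Fqm M ∧
      finrank Fq M = wtRv (Nat.card Fq) (finrank Fq Fqm) c := by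
  have : Finite Fq := .of_injective _ (FaithfulSMul.algebraMap_injective Fq Fqm)
  exact ⟨traceSubspace Fq (span Fqm {c}), le_VL_traceSubspace _ (mem_span_singleton_self c),
    (wtR_eq_finrank_traceSubspace _).symm⟩

end GalClosure

section MinimumDistance

variable {F : Type} [Field F] {q m : ℕ} {C : Set (Fin n → F)}

theorem dRset_le_wtRv_sub {c₁ c₂ : Fin n → F} (h₁ : c₁ ∈ C) (h₂ : c₂ ∈ C) (hne : c₁ ≠ c₂) :
    dRset q m C ≤ wtRv q m (c₁ - c₂) :=
  Nat.sInf_le ⟨c₁, h₁, c₂, h₂, hne, rfl⟩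

theorem exists_dRset_eq_wtRv_sub (hC : C.Nontrivial) :
    ∃ c₁ ∈ C, ∃ c₂ ∈ C, c₁ ≠ c₂ ∧ dRset q m C = wtRv q m (c₁ - c₂) := by
  obtain ⟨a, ha, b, hb, hab⟩ := hC
  exact Nat.sInf_mem (s := {w | ∃ c₁ ∈ C, ∃ c₂ ∈ C, c₁ ≠ c₂ ∧ w = wtRv q m (c₁ - c₂)})
    ⟨_, a, ha, b, hb, hab, rfl⟩

end MinimumDistance

/-- (i) if `ρ < d_R(C)`, every `L ⊆ Fq^n` with `dim L ≥ n − ρ` is an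
information space for `C`; (ii) if `d_R(C) ≤ ρ ≤ n`, some `L` with `dim L = n − ρ`
is not an information space for `C`. -/
theorem stmt16 (q m n ρ : ℕ) (Fq Fqm : Type) [Field Fq] [Field Fqm] [Algebra Fq Fqm]
    [Finite Fqm] (hq : Nat.card Fq = q) (hm : finrank Fq Fqm = m)
    (C : Set (Fin n → Fqm)) (hC : C.Nontrivial) :
    (ρ < dRset q m C →
      ∀ L : Submodule Fq (Fin n → Fq), n - ρ ≤ finrank Fq L →
        ∀ c₁ ∈ C, ∀ c₂ ∈ C, c₁ - c₂ ∈ VL Fqm (perp L) → c₁ = c₂) ∧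
    (dRset q m C ≤ ρ → ρ ≤ n →
      ∃ L : Submodule Fq (Fin n → Fq), finrank Fq L = n - ρ ∧
        ∃ c₁ ∈ C, ∃ c₂ ∈ C, c₁ ≠ c₂ ∧ c₁ - c₂ ∈ VL Fqm (perp L)) := by
  subst hq hm
  refine ⟨fun hρ L hL c₁ h₁ c₂ h₂ hc => ?_, fun hρ _ => ?_⟩
  · have : Finite Fq := .of_injective _ (FaithfulSMul.algebraMap_injective Fq Fqm)
    by_contra hne
    refine hρ.not_ge ?_
    calc dRset (Nat.card Fq) (finrank Fq Fqm) C
        ≤ wtRv (Nat.card Fq) (finrank Fq Fqm) (c₁ - c₂) := dRset_le_wtRv_sub h₁ h₂ hne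
      _ ≤ finrank Fq (perp L) := wtRv_le_finrank_of_mem_VL _ hc
      _ = n - finrank Fq L := finrank_perp L
      _ ≤ ρ := by omega
  · obtain ⟨c₁, h₁, c₂, h₂, hne, hdist⟩ := exists_dRset_eq_wtRv_sub hC
    obtain ⟨M, hM, hM_rank⟩ := exists_mem_VL_finrank_eq_wtRv Fq (c₁ - c₂)
    obtain ⟨L, hL_rank, hML⟩ := exists_finrank_eq_le_perp (hM_rank.trans_le (hdist.ge.trans hρ))
    exact ⟨L, hL_rank, c₁, h₁, c₂, h₂, hne, VL_mono hML hM⟩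

end RankPaper
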